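/- Let A > 0 and β ∈ (0,1) with β ≠ 1/2, and let f be the 2π-periodic extension of u ↦ A|u|^β from [−π,π). Then there exist functions R₁ and R₂ defined near 0 with R₁(u) = O(1) and R₂(u) = o(|u|^{2β−1}) as u → 0, such that for all u ≠ 0 near 0, (1/2)(K_∞ (f²))(u) + f(u) · (K_∞ f)(u) = −A² β (tan(πβ) + tan(πβ/2)) |u|^{2β−1} + R₁(u) + R₂(u). -/

import Mathlib

open Real MeasureTheory Filter Set Asymptotics

/-- Principal value (at `u`) of the integral of `g` over `(-π, π)`. -/
noncomputable def pvInt (g : ℝ → ℝ) (u : ℝ) : ℝ :=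
  limUnder (nhdsWithin (0:ℝ) (Set.Ioi 0))
    (fun ε : ℝ => ∫ x in {x : ℝ | x ∈ Set.Ioo (-π) π ∧ ε < |x - u|}, g x)

/-- Periodic Hilbert transform of a `2π`-periodic function:
`ℋ(f)(u) = (1/π) Σ_{n ∈ ℤ} p.v.∫_{-π}^{π} f(x)/(x - u + 2πn) dx`. -/
noncomputable def periodicHilbert (f : ℝ → ℝ) (u : ℝ) : ℝ :=
  (1/π) * ∑' n : ℤ, pvInt (fun x => f x / (x - u + 2*π*(n : ℝ))) u

/-- The operator `K_∞ = -ℋ ∂ᵤ` acting via the a.e. derivative. -/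
noncomputable def Kinf (f : ℝ → ℝ) (u : ℝ) : ℝ := - periodicHilbert (deriv f) u

/-- The `2π`-periodic extension of `g : [-π, π) → ℝ`. -/
noncomputable def perExt (g : ℝ → ℝ) (x : ℝ) : ℝ :=
  g (x - 2*π*(⌊(x + π)/(2*π)⌋ : ℝ))

/-
On `(-π, π)` the derivative of `C|u|^γ` is `g(u) = Cγ sign(u) |u|^(γ-1)`, which has mean zero, so in
`K_∞(C|u|^γ) = -ℋ g` the terms with `n ≠ 0` add up to `O(1)`. In the term `n = 0`, subtract `g(u)`
from the numerator: this costs `g(u)` times a logarithm that vanishes linearly at `u = 0`. Folding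
the two half-intervals together and rescaling by `|u|` turns the rest into
`Cγ |u|^(γ-1) ∫₀^(π/|u|) 2 (s^γ - 1) / (s² - 1) ds`. For `γ < 1` the integral over `(0, ∞)` is
`π tan(πγ/2)`, by `s ↦ 1/s` on `(1, ∞)`, a geometric series, and the Mittag-Leffler expansion of the
cotangent, and the tail beyond `T` is `O(T^(γ-1))`. For `γ > 1` the integral up to `T` and every
constant are both `O(T^(γ-1))`. Hence, for `γ ≠ 1`,
`K_∞(C|u|^γ) = -Cγ tan(πγ/2) |u|^(γ-1) + O(1)`, to be used with `γ = 2β` and `γ = β`.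
-/

section TangentSeries

lemma hasSum_sub_succ_of_antitone {f : ℕ → ℝ} (hf : Antitone f) (hlim : Tendsto f atTop (nhds 0)) :
    HasSum (fun n ↦ f n - f (n + 1)) (f 0) := by
  rw [hasSum_iff_tendsto_nat_of_nonneg fun n ↦ sub_nonneg.2 (hf n.le_succ)]
  simpa only [Finset.sum_range_sub', sub_zero] using hlim.const_sub (f 0)

lemma hasSum_cotTerm_real {x : ℝ} (hx : (x : ℂ) ∈ Complex.integerComplement) :
    HasSum (fun n : ℕ ↦ 1 / (x - (n + 1)) + 1 / (x + (n + 1))) (π * Real.cot (π * x) - 1 / x) := by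
  have hC := (summable_cotTerm hx).hasSum
  rw [show ∑' n, cotTerm x n = ((π * Real.cot (π * x) - 1 / x : ℝ) : ℂ) by
    simpa [cotTerm] using (cot_series_rep' hx).symm] at hC
  refine Complex.hasSum_ofReal.1 (hC.congr_fun fun n ↦ ?_)
  simp [cotTerm]

lemma hasSum_two_div_sub_two_div_succ {γ : ℝ} (hγ : γ < 1) :
    HasSum (fun k : ℕ ↦ 2 / (2 * (k : ℝ) + 1 - γ) - 2 / (2 * (k + 1 : ℕ) + 1 - γ))
      (2 / (1 - γ)) := by
  have hpos (k : ℕ) : 0 < 2 * (k : ℝ) + 1 - γ := by linarith [k.cast_nonneg (α := ℝ)]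
  have htend : Tendsto (fun k : ℕ ↦ 2 / (2 * (k : ℝ) + 1 - γ)) atTop (nhds 0) := by
    refine tendsto_const_nhds.div_atTop ?_
    simp only [add_sub_assoc]
    exact tendsto_atTop_add_const_right _ _
      (tendsto_natCast_atTop_atTop.const_mul_atTop zero_lt_two)
  simpa only [Nat.cast_zero, mul_zero, zero_add] using hasSum_sub_succ_of_antitone
    (fun i j hij ↦ div_le_div_of_nonneg_left zero_le_two (hpos i) (by gcongr)) htend

-- The Mittag-Leffler expansion of `π * cot (π * x)` at `x = (1 - γ) / 2`; the telescoping series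
-- realigns the two families of poles.
lemma hasSum_pi_mul_tan {γ : ℝ} (hγ : |γ| < 1) :
    HasSum (fun k : ℕ ↦ 2 / (2 * k + 1 - γ) - 2 / (2 * k + 1 + γ)) (π * Real.tan (π * γ / 2)) := by
  obtain ⟨hγl, hγu⟩ := abs_lt.1 hγ
  have hx : (((1 - γ) / 2 : ℝ) : ℂ) ∈ Complex.integerComplement := by
    rintro ⟨n, hn⟩
    have hn : (n : ℝ) = (1 - γ) / 2 := by exact_mod_cast hn
    have hn0 : (0 : ℝ) < n := by linarith
    have hn1 : (n : ℝ) < 1 := by linarith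
    norm_cast at hn0 hn1
    omega
  have hcot : Real.cot (π * ((1 - γ) / 2)) = Real.tan (π * γ / 2) := by
    rw [show π * ((1 - γ) / 2) = π / 2 - π * γ / 2 by ring, Real.cot_eq_cos_div_sin,
      Real.tan_eq_sin_div_cos, Real.cos_pi_div_two_sub, Real.sin_pi_div_two_sub]
  convert (hasSum_two_div_sub_two_div_succ hγu).add (hasSum_cotTerm_real hx) using 1
  · ext k
    rw [show (1 - γ) / 2 - ((k : ℝ) + 1) = -((2 * k + 1 + γ) / 2) by ring,
      show (1 - γ) / 2 + ((k : ℝ) + 1) = (2 * (k + 1 : ℕ) + 1 - γ) / 2 by push_cast; ring,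
      one_div_neg_eq_neg_one_div, one_div_div, one_div_div]
    ring
  · rw [hcot, one_div_div]
    ring

end TangentSeries

section FoldedKernel

variable {γ s : ℝ}

/-- The kernel `2 (s ^ γ - 1) / (s ^ 2 - 1)` which remains after the two halves of the principal
value integral of `sign x * |x| ^ (γ - 1) / (x - u)` are folded onto the positive half-line and `x`
is rescaled to `|u| * s`. The value at the removable singularity `s = 1` is the junk value `0`. -/
noncomputable def foldedKernel (γ s : ℝ) : ℝ := 2 * (s ^ γ - 1) / (s ^ 2 - 1)

lemma measurable_foldedKernel (γ : ℝ) : Measurable (foldedKernel γ) := by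
  unfold foldedKernel
  fun_prop

lemma foldedKernel_inv (γ : ℝ) (hs : 0 < s) :
    foldedKernel γ s⁻¹ = s ^ 2 * s ^ (-γ) * foldedKernel γ s := by
  rcases eq_or_ne s 1 with rfl | hs1
  · simp
  · have hs2 : s ^ 2 - 1 ≠ 0 :=
      sub_ne_zero.2 ((pow_eq_one_iff_of_nonneg hs.le two_ne_zero).not.2 hs1)
    have hs2' : 1 - s ^ 2 ≠ 0 := by rwa [← neg_sub, neg_ne_zero]
    have hpow : s ^ γ ≠ 0 := (rpow_pos_of_pos hs γ).ne'
    simp only [foldedKernel]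
    rw [inv_rpow hs.le, rpow_neg hs.le, show s⁻¹ ^ 2 - 1 = (1 - s ^ 2) / s ^ 2 by field_simp]
    field_simp
    ring

lemma foldedKernel_nonneg (hγ : 0 ≤ γ) (hs : 0 ≤ s) : 0 ≤ foldedKernel γ s := by
  rcases le_total s 1 with hs1 | hs1
  · exact div_nonneg_of_nonpos (by linarith [rpow_le_one hs hs1 hγ])
      (by linarith [pow_le_one₀ (n := 2) hs hs1])
  · exact div_nonneg (by linarith [one_le_rpow hs1 hγ]) (by linarith [one_le_pow₀ (n := 2) hs1])

lemma one_sub_rpow_le_max_mul {p x : ℝ} (hp : 0 ≤ p) (hx0 : 0 ≤ x) (hx1 : x ≤ 1) :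
    1 - x ^ p ≤ max 1 p * (1 - x) := by
  rcases le_total p 1 with h | h
  · have := rpow_le_rpow_of_exponent_ge' hx0 hx1 hp h
    rw [rpow_one] at this
    rw [max_eq_left h]
    linarith
  · have := one_add_mul_self_le_rpow_one_add (s := x - 1) (by linarith) h
    rw [add_sub_cancel] at this
    rw [max_eq_right h]
    linarith

lemma foldedKernel_le_of_lt_one (hγ : 0 ≤ γ) (hs0 : 0 ≤ s) (hs1 : s < 1) :
    foldedKernel γ s ≤ max 2 γ := by
  have hs2 : 0 < 1 - s ^ 2 := by linarith [pow_lt_one₀ hs0 hs1 two_ne_zero]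
  have hbern := one_sub_rpow_le_max_mul (p := γ / 2) (by positivity) (sq_nonneg s) (by linarith)
  rw [← rpow_natCast_mul hs0, Nat.cast_two, mul_div_cancel₀ γ two_ne_zero] at hbern
  rw [foldedKernel, ← neg_div_neg_eq, neg_sub, div_le_iff₀ hs2]
  have hmax : max 2 γ = 2 * max 1 (γ / 2) := by
    rw [mul_max_of_nonneg _ _ zero_le_two, mul_one, mul_div_cancel₀ γ two_ne_zero]
  rw [hmax]
  linarith

lemma norm_foldedKernel_le_of_lt_one (hγ : 0 ≤ γ) (hs0 : 0 ≤ s) (hs1 : s < 1) :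
    ‖foldedKernel γ s‖ ≤ max 2 γ :=
  (norm_of_nonneg (foldedKernel_nonneg hγ hs0)).trans_le (foldedKernel_le_of_lt_one hγ hs0 hs1)

lemma foldedKernel_le_of_one_lt (hγ : 0 ≤ γ) (hs : 1 < s) :
    foldedKernel γ s ≤ max 2 γ * s ^ (γ - 2) := by
  have hs0 : 0 < s := one_pos.trans hs
  have hle := foldedKernel_le_of_lt_one hγ (inv_pos.2 hs0).le (inv_lt_one_of_one_lt₀ hs)
  have hinv : foldedKernel γ s = foldedKernel γ s⁻¹ * s ^ (γ - 2) := by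
    rw [foldedKernel_inv γ hs0, rpow_sub hs0, rpow_two, rpow_neg hs0.le]
    have := (rpow_pos_of_pos hs0 γ).ne'
    field_simp
  rw [hinv]
  gcongr

lemma norm_foldedKernel_le_of_one_lt (hγ : 0 ≤ γ) (hs : 1 < s) :
    ‖foldedKernel γ s‖ ≤ max 2 γ * s ^ (γ - 2) :=
  (norm_of_nonneg (foldedKernel_nonneg hγ (one_pos.trans hs).le)).trans_le
    (foldedKernel_le_of_one_lt hγ hs)

lemma intervalIntegrable_foldedKernel_zero_one (hγ : 0 ≤ γ) :
    IntervalIntegrable (foldedKernel γ) volume 0 1 := by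
  rw [intervalIntegrable_iff_integrableOn_Ioo_of_le zero_le_one]
  refine Measure.integrableOn_of_bounded (by simp)
    (measurable_foldedKernel γ).aestronglyMeasurable (M := max 2 γ) ?_
  filter_upwards [ae_restrict_mem measurableSet_Ioo] with s hs
  exact norm_foldedKernel_le_of_lt_one hγ hs.1.le hs.2

lemma intervalIntegrable_foldedKernel_one (hγ : 0 ≤ γ) {T : ℝ} (hT : 1 ≤ T) :
    IntervalIntegrable (foldedKernel γ) volume 1 T := by
  have hpow : IntervalIntegrable (fun s ↦ max 2 γ * s ^ (γ - 2)) volume 1 T :=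
    (intervalIntegral.intervalIntegrable_rpow
      (Or.inr (notMem_uIcc_of_lt one_pos (one_pos.trans_le hT)))).const_mul _
  refine hpow.mono_fun' (measurable_foldedKernel γ).aestronglyMeasurable ?_
  filter_upwards [ae_restrict_mem measurableSet_uIoc] with s hs
  exact norm_foldedKernel_le_of_one_lt hγ (uIoc_of_le hT ▸ hs).1

lemma integrableOn_foldedKernel_Ioi_one (hγ0 : 0 ≤ γ) (hγ1 : γ < 1) :
    IntegrableOn (foldedKernel γ) (Ioi 1) := by
  have hpow := (integrableOn_Ioi_rpow_of_lt (a := γ - 2) (by linarith) one_pos).const_mul (max 2 γ)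
  refine hpow.mono' (measurable_foldedKernel γ).aestronglyMeasurable ?_
  filter_upwards [ae_restrict_mem measurableSet_Ioi] with s hs
  exact norm_foldedKernel_le_of_one_lt hγ0 hs

lemma integrableOn_foldedKernel_Ioi_zero (hγ0 : 0 ≤ γ) (hγ1 : γ < 1) :
    IntegrableOn (foldedKernel γ) (Ioi 0) := by
  rw [← Ioc_union_Ioi_eq_Ioi zero_le_one]
  exact ((intervalIntegrable_iff_integrableOn_Ioc_of_le zero_le_one).1
    (intervalIntegrable_foldedKernel_zero_one hγ0)).union
    (integrableOn_foldedKernel_Ioi_one hγ0 hγ1)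

lemma integrableOn_rpow_Ioo_zero_one {r : ℝ} (hr : -1 < r) :
    IntegrableOn (fun s : ℝ ↦ s ^ r) (Ioo 0 1) :=
  (intervalIntegrable_iff_integrableOn_Ioo_of_le zero_le_one).1
    (intervalIntegral.intervalIntegrable_rpow' hr)

lemma integral_rpow_Ioo_zero_one {r : ℝ} (hr : -1 < r) :
    ∫ s in Ioo (0 : ℝ) 1, s ^ r = 1 / (r + 1) := by
  rw [← integral_Ioc_eq_integral_Ioo, ← intervalIntegral.integral_of_le zero_le_one,
    integral_rpow (Or.inl hr), one_rpow, zero_rpow (by linarith), sub_zero]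

lemma integral_rpow_sub_rpow_div_one_sub_sq (hγ0 : 0 ≤ γ) (hγ1 : γ < 1) :
    ∫ s in Ioo (0 : ℝ) 1, 2 * (s ^ (-γ) - s ^ γ) / (1 - s ^ 2) = π * Real.tan (π * γ / 2) := by
  set F : ℕ → ℝ → ℝ := fun k s ↦ 2 * (s ^ (2 * k - γ) - s ^ (2 * k + γ))
  have hexp (k : ℕ) : -1 < 2 * (k : ℝ) - γ := by linarith [k.cast_nonneg (α := ℝ)]
  have hexp' (k : ℕ) : -1 < 2 * (k : ℝ) + γ := by linarith [k.cast_nonneg (α := ℝ)]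
  have hpow (k : ℕ) := integrableOn_rpow_Ioo_zero_one (hexp k)
  have hpow' (k : ℕ) := integrableOn_rpow_Ioo_zero_one (hexp' k)
  have hF_int (k : ℕ) : IntegrableOn (F k) (Ioo 0 1) :=
    ((hpow k).sub (hpow' k)).const_mul 2
  have hF_integral (k : ℕ) :
      ∫ s in Ioo (0 : ℝ) 1, F k s = 2 / (2 * k + 1 - γ) - 2 / (2 * k + 1 + γ) := by
    rw [integral_const_mul, integral_sub (hpow k) (hpow' k),
      integral_rpow_Ioo_zero_one (hexp k), integral_rpow_Ioo_zero_one (hexp' k)]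
    ring
  have hF_nonneg (k : ℕ) : ∀ s ∈ Ioo (0 : ℝ) 1, 0 ≤ F k s := fun s hs ↦
    mul_nonneg zero_le_two
      (sub_nonneg.2 (rpow_le_rpow_of_exponent_ge hs.1 hs.2.le (by linarith)))
  have hseries := hasSum_pi_mul_tan (abs_lt.2 ⟨by linarith, hγ1⟩)
  have hF_sum : ∀ s ∈ Ioo (0 : ℝ) 1,
      2 * (s ^ (-γ) - s ^ γ) / (1 - s ^ 2) = ∑' k, F k s := fun s hs ↦ by
    have hgeom := (hasSum_geometric_of_lt_one (sq_nonneg s)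
      (pow_lt_one₀ hs.1.le hs.2 two_ne_zero)).mul_left (2 * (s ^ (-γ) - s ^ γ))
    refine (hgeom.congr_fun fun k ↦ ?_).tsum_eq.symm
    simp only [F]
    rw [← pow_mul, ← rpow_natCast s (2 * k), sub_eq_add_neg (2 * (k : ℝ)), rpow_add hs.1,
      rpow_add hs.1]
    push_cast
    ring
  rw [setIntegral_congr_fun measurableSet_Ioo hF_sum]
  refine (hasSum_integral_of_summable_integral_norm hF_int ?_).unique
    (hseries.congr_fun hF_integral)
  refine hseries.summable.congr fun k ↦ ?_
  rw [← hF_integral k]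
  exact setIntegral_congr_fun measurableSet_Ioo fun s hs ↦ (norm_of_nonneg (hF_nonneg k s hs)).symm

lemma integral_Ioi_one_eq_integral_inv (f : ℝ → ℝ) :
    ∫ x in Ioi 1, f x = ∫ s in Ioo (0 : ℝ) 1, (s ^ 2)⁻¹ * f s⁻¹ := by
  have himage : Inv.inv '' Ioo (0 : ℝ) 1 = Ioi 1 := by
    rw [image_inv_eq_inv, inv_Ioo_0_left one_pos, inv_one]
  rw [← himage, integral_image_eq_integral_abs_deriv_smul measurableSet_Ioo
    (fun s hs ↦ (hasDerivAt_inv hs.1.ne').hasDerivWithinAt) inv_injective.injOn]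
  simp only [abs_neg, abs_inv, abs_sq, smul_eq_mul]

lemma integral_foldedKernel_Ioi (hγ0 : 0 ≤ γ) (hγ1 : γ < 1) :
    ∫ s in Ioi 0, foldedKernel γ s = π * Real.tan (π * γ / 2) := by
  have hint : IntegrableOn (foldedKernel γ) (Ioi 0) := integrableOn_foldedKernel_Ioi_zero hγ0 hγ1
  have hint01 : IntegrableOn (foldedKernel γ) (Ioo 0 1) := hint.mono_set Ioo_subset_Ioi_self
  have hinv : ∀ s ∈ Ioo (0 : ℝ) 1,
      (s ^ 2)⁻¹ * foldedKernel γ s⁻¹ = s ^ (-γ) * foldedKernel γ s := fun s hs ↦ by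
    rw [foldedKernel_inv γ hs.1, ← mul_assoc, inv_mul_cancel_left₀ (pow_ne_zero 2 hs.1.ne')]
  have hint_inv : IntegrableOn (fun s ↦ s ^ (-γ) * foldedKernel γ s) (Ioo 0 1) := by
    refine (integrableOn_rpow_Ioo_zero_one (neg_lt_neg hγ1)).mul_bdd (c := max 2 γ)
      (measurable_foldedKernel γ).aestronglyMeasurable ?_
    filter_upwards [ae_restrict_mem measurableSet_Ioo] with s hs
    exact norm_foldedKernel_le_of_lt_one hγ0 hs.1.le hs.2
  rw [← Ioc_union_Ioi_eq_Ioi zero_le_one, setIntegral_union Ioc_disjoint_Ioi_same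
    measurableSet_Ioi (hint.mono_set Ioc_subset_Ioi_self)
    (hint.mono_set (Ioi_subset_Ioi zero_le_one)), integral_Ioi_one_eq_integral_inv,
    integral_Ioc_eq_integral_Ioo, setIntegral_congr_fun measurableSet_Ioo hinv,
    ← integral_add hint01 hint_inv, ← integral_rpow_sub_rpow_div_one_sub_sq hγ0 hγ1]
  refine setIntegral_congr_fun measurableSet_Ioo fun s hs ↦ ?_
  have hs2 : 1 - s ^ 2 ≠ 0 := (sub_pos.2 (pow_lt_one₀ hs.1.le hs.2 two_ne_zero)).ne'
  have hs2' : s ^ 2 - 1 ≠ 0 := by rwa [← neg_sub, neg_ne_zero]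
  have hpow : s ^ γ ≠ 0 := (rpow_pos_of_pos hs.1 γ).ne'
  simp only [foldedKernel]
  rw [rpow_neg hs.1.le]
  field_simp
  ring

lemma norm_integral_foldedKernel_one_le (hγ0 : 0 ≤ γ) (hγ1 : γ ≠ 1) {T : ℝ} (hT : 1 ≤ T) :
    ‖∫ s in 1..T, foldedKernel γ s‖ ≤ max 2 γ * ((T ^ (γ - 1) - 1) / (γ - 1)) := by
  have h0 : (0 : ℝ) ∉ uIcc 1 T := notMem_uIcc_of_lt one_pos (one_pos.trans_le hT)
  calc ‖∫ s in 1..T, foldedKernel γ s‖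
      ≤ ∫ s in 1..T, max 2 γ * s ^ (γ - 2) :=
        intervalIntegral.norm_integral_le_of_norm_le hT
          (.of_forall fun s hs ↦ norm_foldedKernel_le_of_one_lt hγ0 hs.1)
          ((intervalIntegral.intervalIntegrable_rpow (Or.inr h0)).const_mul _)
    _ = max 2 γ * ((T ^ (γ - 1) - 1) / (γ - 1)) := by
        rw [intervalIntegral.integral_const_mul,
          integral_rpow (Or.inr ⟨fun h ↦ hγ1 (by linarith), h0⟩),
          one_rpow, show γ - 2 + 1 = γ - 1 by ring]

lemma norm_integral_foldedKernel_Ioi_le (hγ0 : 0 ≤ γ) (hγ1 : γ < 1) {T : ℝ} (hT : 1 ≤ T) :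
    ‖∫ s in Ioi T, foldedKernel γ s‖ ≤ max 2 γ / (1 - γ) * T ^ (γ - 1) := by
  have hT0 : 0 < T := one_pos.trans_le hT
  calc ‖∫ s in Ioi T, foldedKernel γ s‖
      ≤ ∫ s in Ioi T, max 2 γ * s ^ (γ - 2) := by
        refine norm_integral_le_of_norm_le
          ((integrableOn_Ioi_rpow_of_lt (by linarith) hT0).const_mul _) ?_
        filter_upwards [ae_restrict_mem measurableSet_Ioi] with s hs
        exact norm_foldedKernel_le_of_one_lt hγ0 (hT.trans_lt hs)
    _ = max 2 γ / (1 - γ) * T ^ (γ - 1) := by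
        rw [integral_const_mul, integral_Ioi_rpow_of_lt (by linarith) hT0,
          show γ - 2 + 1 = -(1 - γ) by ring, neg_div_neg_eq, neg_sub]
        ring

lemma isBigO_integral_foldedKernel_of_lt_one (hγ0 : 0 ≤ γ) (hγ1 : γ < 1) :
    (fun T ↦ (∫ s in 0..T, foldedKernel γ s) - π * Real.tan (π * γ / 2))
      =O[atTop] fun T ↦ T ^ (γ - 1) := by
  refine .of_bound (max 2 γ / (1 - γ)) ?_
  filter_upwards [eventually_ge_atTop 1] with T hT
  have hint := integrableOn_foldedKernel_Ioi_zero hγ0 hγ1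
  have hT0 : 0 ≤ T := zero_le_one.trans hT
  have hsplit := intervalIntegral.integral_Ioi_sub_Ioi hint hT0
  rw [integral_foldedKernel_Ioi hγ0 hγ1] at hsplit
  rw [← hsplit, sub_sub_cancel_left, norm_neg, norm_of_nonneg (rpow_nonneg hT0 _)]
  exact norm_integral_foldedKernel_Ioi_le hγ0 hγ1 hT

lemma isBigO_integral_foldedKernel_of_one_lt (hγ1 : 1 < γ) (c : ℝ) :
    (fun T ↦ (∫ s in 0..T, foldedKernel γ s) - c) =O[atTop] fun T ↦ T ^ (γ - 1) := by
  have hγ0 : 0 ≤ γ := zero_le_one.trans hγ1.le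
  have hconst (c : ℝ) : (fun _ : ℝ ↦ c) =O[atTop] fun T : ℝ ↦ T ^ (γ - 1) :=
    (isLittleO_const_left.2 <| .inr <|
      tendsto_norm_atTop_atTop.comp (tendsto_rpow_atTop (sub_pos.2 hγ1))).isBigO
  have htail : (fun T ↦ ∫ s in 1..T, foldedKernel γ s) =O[atTop] fun T ↦ T ^ (γ - 1) := by
    refine .of_bound (max 2 γ / (γ - 1)) ?_
    filter_upwards [eventually_ge_atTop 1] with T hT
    refine (norm_integral_foldedKernel_one_le hγ0 hγ1.ne' hT).trans ?_
    rw [norm_of_nonneg (rpow_nonneg (zero_le_one.trans hT) _), div_mul_eq_mul_div, mul_div_assoc]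
    have := sub_pos.2 hγ1
    gcongr
    linarith
  refine ((htail.add (hconst ((∫ s in 0..1, foldedKernel γ s) - c))).congr' ?_ .rfl)
  filter_upwards [eventually_ge_atTop 1] with T hT
  rw [← intervalIntegral.integral_add_adjacent_intervals
    (intervalIntegrable_foldedKernel_zero_one hγ0) (intervalIntegrable_foldedKernel_one hγ0 hT)]
  ring

lemma isBigO_integral_foldedKernel_sub_tan (hγ0 : 0 ≤ γ) (hγ1 : γ ≠ 1) :
    (fun T ↦ (∫ s in 0..T, foldedKernel γ s) - π * Real.tan (π * γ / 2))
      =O[atTop] fun T ↦ T ^ (γ - 1) := by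
  rcases hγ1.lt_or_gt with h | h
  · exact isBigO_integral_foldedKernel_of_lt_one hγ0 h
  · exact isBigO_integral_foldedKernel_of_one_lt h _

end FoldedKernel

section PrincipalValue

variable {a b u L : ℝ} {g : ℝ → ℝ}

/-- The interval `(a, b)` with the closed `ε`-neighbourhood of `u` removed: the domain of the
truncated integrals defining a principal value at `u`. -/
def puncturedIoo (a b u ε : ℝ) : Set ℝ := {x | x ∈ Ioo a b ∧ ε < |x - u|}

/-- The principal value at `u` of the integral of `g` over `(a, b)` exists and equals `L`. -/
def HasPvInt (g : ℝ → ℝ) (a b u L : ℝ) : Prop :=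
  Tendsto (fun ε ↦ ∫ x in puncturedIoo a b u ε, g x) (nhdsWithin 0 (Ioi 0)) (nhds L)

lemma HasPvInt.pvInt_eq (h : HasPvInt g (-π) π u L) : pvInt g u = L := h.limUnder_eq

lemma HasPvInt.const_mul (h : HasPvInt g a b u L) (c : ℝ) :
    HasPvInt (fun x ↦ c * g x) a b u (c * L) := by
  simpa only [HasPvInt, integral_const_mul] using Tendsto.const_mul c h

lemma puncturedIoo_subset_Ioo (a b u ε : ℝ) : puncturedIoo a b u ε ⊆ Ioo a b := fun _ hx ↦ hx.1

lemma measurableSet_puncturedIoo (a b u ε : ℝ) : MeasurableSet (puncturedIoo a b u ε) :=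
  measurableSet_Ioo.inter
    (measurableSet_lt measurable_const (by fun_prop : Measurable fun x : ℝ ↦ |x - u|))

lemma puncturedIoo_eq_union (hu : u ∈ Ioo a b) {ε : ℝ} (hε : 0 ≤ ε) :
    puncturedIoo a b u ε = Ioo a (u - ε) ∪ Ioo (u + ε) b := by
  obtain ⟨ha, hb⟩ := hu
  ext x
  simp only [puncturedIoo, mem_ofPred_eq, mem_union, mem_Ioo, lt_abs]
  constructor
  · rintro ⟨⟨hax, hxb⟩, h | h⟩
    · exact .inr ⟨by linarith, hxb⟩
    · exact .inl ⟨hax, by linarith⟩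
  · rintro (⟨hax, hx⟩ | ⟨hx, hxb⟩)
    · exact ⟨⟨hax, by linarith⟩, .inr (by linarith)⟩
    · exact ⟨⟨by linarith, hxb⟩, .inl (by linarith)⟩

lemma integrableOn_div_sub_puncturedIoo (hg : IntegrableOn g (Ioo a b)) (u : ℝ) {ε : ℝ}
    (hε : 0 < ε) : IntegrableOn (fun x ↦ g x / (x - u)) (puncturedIoo a b u ε) := by
  refine (hg.mono_set (puncturedIoo_subset_Ioo a b u ε)).mul_bdd (c := ε⁻¹)
    (by fun_prop) ?_
  filter_upwards [ae_restrict_mem (measurableSet_puncturedIoo a b u ε)] with x hx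
  rw [norm_inv]
  exact inv_anti₀ hε hx.2.le

lemma hasPvInt_of_integrableOn (u : ℝ) (hg : IntegrableOn g (Ioo a b)) :
    HasPvInt g a b u (∫ x in Ioo a b, g x) := by
  simp only [HasPvInt, ← integral_indicator (measurableSet_puncturedIoo a b u _),
    ← integral_indicator measurableSet_Ioo]
  have hgi : Integrable ((Ioo a b).indicator g) := hg.integrable_indicator measurableSet_Ioo
  refine tendsto_integral_filter_of_dominated_convergence _ (.of_forall fun ε ↦ ?_)
    (.of_forall fun ε ↦ .of_forall fun x ↦ ?_) hgi.norm ?_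
  · exact ((hg.mono_set (puncturedIoo_subset_Ioo a b u ε)).integrable_indicator
      (measurableSet_puncturedIoo a b u ε)).aestronglyMeasurable
  · exact norm_indicator_le_of_subset (puncturedIoo_subset_Ioo a b u ε) g x
  · filter_upwards [Measure.ae_ne volume u] with x hx
    refine tendsto_const_nhds.congr' ?_
    filter_upwards [nhdsWithin_le_nhds (eventually_lt_nhds (abs_pos.2 (sub_ne_zero.2 hx)))]
      with ε hε
    have hmem : x ∈ Ioo a b ↔ x ∈ puncturedIoo a b u ε := by
      simp only [puncturedIoo, mem_ofPred_eq, hε, and_true]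
    exact indicator_eq_indicator hmem rfl

lemma hasPvInt_inv_sub (hu : u ∈ Ioo a b) :
    HasPvInt (fun x ↦ (x - u)⁻¹) a b u (log ((b - u) / (u - a))) := by
  obtain ⟨hau, hub⟩ := hu
  refine tendsto_const_nhds.congr' ?_
  filter_upwards [Ioo_mem_nhdsGT (lt_min (sub_pos.2 hau) (sub_pos.2 hub))] with ε ⟨hε, hεmin⟩
  obtain ⟨hεa, hεb⟩ := lt_min_iff.1 hεmin
  have hint : IntegrableOn (fun x ↦ (x - u)⁻¹) (puncturedIoo a b u ε) := by
    simp only [← one_div]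
    exact integrableOn_div_sub_puncturedIoo (integrableOn_const (by simp)) u hε
  have hdisj : Disjoint (Ioo a (u - ε)) (Ioo (u + ε) b) :=
    disjoint_left.2 fun x hx hx' ↦ by linarith [hx.2, hx'.1]
  have hleft : ∫ x in Ioo a (u - ε), (x - u)⁻¹ = log (ε / (u - a)) := by
    rw [← integral_Ioc_eq_integral_Ioo, ← intervalIntegral.integral_of_le (by linarith),
      intervalIntegral.integral_comp_sub_right (fun y ↦ y⁻¹) u,
      integral_inv_of_neg (by linarith) (by linarith), ← neg_div_neg_eq]
    congr 2 <;> ring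
  have hright : ∫ x in Ioo (u + ε) b, (x - u)⁻¹ = log ((b - u) / ε) := by
    rw [← integral_Ioc_eq_integral_Ioo, ← intervalIntegral.integral_of_le (by linarith),
      intervalIntegral.integral_comp_sub_right (fun y ↦ y⁻¹) u, add_sub_cancel_left,
      integral_inv_of_pos hε (by linarith)]
  rw [puncturedIoo_eq_union ⟨hau, hub⟩ hε.le] at hint ⊢
  rw [setIntegral_union hdisj measurableSet_Ioo hint.left_of_union hint.right_of_union,
    hleft, hright, ← log_mul (div_pos hε (by linarith)).ne' (div_pos (by linarith) hε).ne',
    mul_comm, div_mul_div_cancel₀ hε.ne']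

lemma integrableOn_slope (hg : IntegrableOn g (Ioo a b)) (hgu : DifferentiableAt ℝ g u) :
    IntegrableOn (slope g u) (Ioo a b) := by
  obtain ⟨C, hC, hlip⟩ := hgu.isBigO_sub.exists_pos
  obtain ⟨δ, hδ, hlip⟩ := Metric.eventually_nhds_iff.1 hlip.bound
  have hdom : IntegrableOn (fun x ↦ C + (‖g x‖ + ‖g u‖) / δ) (Ioo a b) :=
    (integrableOn_const (by simp)).add ((hg.norm.add (integrableOn_const (by simp))).div_const δ)
  have hmeas : AEStronglyMeasurable (slope g u) (volume.restrict (Ioo a b)) := by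
    have hinv : Measurable fun x : ℝ ↦ (x - u)⁻¹ := by fun_prop
    exact hinv.aestronglyMeasurable.smul
      (hg.aestronglyMeasurable.sub aestronglyMeasurable_const)
  refine hdom.mono' hmeas (.of_forall fun x ↦ ?_)
  rw [slope_def_field, norm_div]
  rcases lt_or_ge ‖x - u‖ δ with hx | hx
  · exact (div_le_of_le_mul₀ (norm_nonneg _) hC.le (hlip hx)).trans
      (le_add_of_nonneg_right (by positivity))
  · exact (div_le_div₀ (by positivity) (norm_sub_le _ _) hδ hx).trans
      (le_add_of_nonneg_left hC.le)

lemma hasPvInt_div_sub (hu : u ∈ Ioo a b) (hg : IntegrableOn g (Ioo a b))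
    (hgu : DifferentiableAt ℝ g u) :
    HasPvInt (fun x ↦ g x / (x - u)) a b u
      ((∫ x in Ioo a b, slope g u x) + g u * log ((b - u) / (u - a))) := by
  have hslope := integrableOn_slope hg hgu
  refine ((hasPvInt_of_integrableOn u hslope).add
    ((hasPvInt_inv_sub hu).const_mul (g u))).congr' ?_
  filter_upwards [self_mem_nhdsWithin] with ε hε
  have hinv : IntegrableOn (fun x ↦ g u * (x - u)⁻¹) (puncturedIoo a b u ε) :=
    integrableOn_div_sub_puncturedIoo (integrableOn_const (by simp)) u hε
  rw [← integral_add (hslope.mono_set (puncturedIoo_subset_Ioo a b u ε)) hinv]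
  congr with x
  rw [slope_def_field]
  ring

end PrincipalValue

section SignedRpow

variable {a p u γ : ℝ}

lemma integral_neg_self_eq_integral_add_comp_neg {f : ℝ → ℝ}
    (hf : IntervalIntegrable f volume (-a) a) :
    ∫ x in -a..a, f x = ∫ x in 0..a, (f x + f (-x)) := by
  have hmem : (0 : ℝ) ∈ uIcc (-a) a := by
    rcases le_total 0 a with h | h
    · exact mem_uIcc_of_le (neg_nonpos.2 h) h
    · exact mem_uIcc_of_ge h (neg_nonneg.2 h)
  have hl : IntervalIntegrable f volume (-a) 0 := hf.mono_set (uIcc_subset_uIcc_left hmem)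
  have hr : IntervalIntegrable f volume 0 a := hf.mono_set (uIcc_subset_uIcc_right hmem)
  have hneg : IntervalIntegrable (fun x ↦ f (-x)) volume 0 a := by
    simpa only [neg_neg, neg_zero] using
      ((IntervalIntegrable.iff_comp_neg (by finiteness)).1 hl).symm
  rw [intervalIntegral.integral_add hr hneg, intervalIntegral.integral_comp_neg, neg_zero, add_comm,
    intervalIntegral.integral_add_adjacent_intervals hl hr]

lemma integral_slope_of_odd {g : ℝ → ℝ} (hodd : ∀ x, g (-x) = -g x)
    (hint : IntervalIntegrable (slope g u) volume (-a) a) :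
    ∫ x in -a..a, slope g u x = ∫ x in 0..a, 2 * (x * g x - u * g u) / (x ^ 2 - u ^ 2) := by
  rw [integral_neg_self_eq_integral_add_comp_neg hint]
  refine intervalIntegral.integral_congr_ae ?_
  filter_upwards [Measure.ae_ne volume u, Measure.ae_ne volume (-u)] with x hx hx' _
  have hsub : x - u ≠ 0 := sub_ne_zero.2 hx
  have hadd : x + u ≠ 0 := fun h ↦ hx' (eq_neg_of_add_eq_zero_left h)
  rw [slope_def_field, slope_def_field, hodd, show -x - u = -(x + u) by ring,
    show x ^ 2 - u ^ 2 = (x - u) * (x + u) by ring]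
  field_simp
  ring

lemma integral_two_mul_rpow_sub_div_sq_sub (ha : 0 ≤ a) (hu : u ≠ 0) :
    ∫ x in 0..a, 2 * (|x| ^ γ - |u| ^ γ) / (x ^ 2 - u ^ 2)
      = |u| ^ (γ - 1) * ∫ s in 0..a / |u|, foldedKernel γ s := by
  have hu' : 0 < |u| := abs_pos.2 hu
  have hker : ∀ x ∈ uIcc 0 a, 2 * (|x| ^ γ - |u| ^ γ) / (x ^ 2 - u ^ 2)
      = |u| ^ (γ - 2) * foldedKernel γ (x / |u|) := fun x hx ↦ by
    have hx0 : 0 ≤ x := (uIcc_of_le ha ▸ hx).1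
    have hpow : |u| ^ γ ≠ 0 := (rpow_pos_of_pos hu' γ).ne'
    rw [foldedKernel, div_rpow hx0 hu'.le, rpow_sub hu', rpow_two, abs_of_nonneg hx0, ← sq_abs u,
      div_pow, div_sub_one (pow_ne_zero 2 hu'.ne'), div_sub_one hpow]
    field_simp
  rw [intervalIntegral.integral_congr hker, intervalIntegral.integral_const_mul,
    intervalIntegral.integral_comp_div _ hu'.ne', zero_div, smul_eq_mul, ← mul_assoc,
    ← rpow_add_one hu'.ne', show γ - 2 + 1 = γ - 1 by ring]

/-- The odd power function `sign x * |x| ^ p`, written so that it is `0` at the origin. For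
`p = γ - 1` it is, up to the factor `γ`, the derivative of `|x| ^ γ`. -/
noncomputable def signedRpow (p x : ℝ) : ℝ := |x| ^ (p - 1) * x

lemma signedRpow_neg (p x : ℝ) : signedRpow p (-x) = -signedRpow p x := by
  rw [signedRpow, signedRpow, abs_neg, mul_neg]

lemma signedRpow_of_pos (p : ℝ) {x : ℝ} (hx : 0 < x) : signedRpow p x = x ^ p := by
  rw [signedRpow, abs_of_pos hx, ← rpow_add_one hx.ne', sub_add_cancel]

lemma mul_signedRpow_sub_one (γ : ℝ) {x : ℝ} (hx : x ≠ 0) :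
    x * signedRpow (γ - 1) x = |x| ^ γ := by
  have hx' : |x| ≠ 0 := abs_ne_zero.2 hx
  rw [signedRpow, mul_left_comm, ← abs_mul_abs_self x, ← mul_assoc, ← rpow_add_one hx',
    ← rpow_add_one hx', sub_add_cancel, sub_add_cancel]

lemma hasDerivAt_const_mul_abs_rpow (C γ : ℝ) {x : ℝ} (hx : x ≠ 0) :
    HasDerivAt (fun y ↦ C * |y| ^ γ) (C * γ * signedRpow (γ - 1) x) x := by
  have hx' : |x| ≠ 0 := abs_ne_zero.2 hx
  have hsign : (SignType.sign x : ℝ) = x / |x| := by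
    rw [eq_div_iff hx', sign_mul_abs]
  refine (((hasDerivAt_abs hx).rpow_const (p := γ) (.inl hx')).const_mul C).congr_deriv ?_
  rw [signedRpow, hsign, rpow_sub_one hx' (γ - 1)]
  ring

lemma differentiableAt_signedRpow (p : ℝ) {x : ℝ} (hx : x ≠ 0) :
    DifferentiableAt ℝ (signedRpow p) x :=
  ((differentiableAt_abs hx).rpow_const (.inl (abs_ne_zero.2 hx))).mul differentiableAt_id

lemma intervalIntegrable_signedRpow (hp : -1 < p) {a b : ℝ} :
    IntervalIntegrable (signedRpow p) volume a b := by
  refine intervalIntegrable_of_odd (fun x ↦ (signedRpow_neg p x).symm) fun x hx ↦ ?_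
  refine (intervalIntegral.intervalIntegrable_rpow' hp).congr fun y hy ↦ ?_
  rw [uIoc_of_le hx.le] at hy
  exact (signedRpow_of_pos p hy.1).symm

lemma integral_signedRpow_neg_self (p a : ℝ) : ∫ x in -a..a, signedRpow p x = 0 := by
  have h := intervalIntegral.integral_comp_neg (a := -a) (b := a) (signedRpow p)
  simp only [signedRpow_neg, intervalIntegral.integral_neg, neg_neg] at h
  linarith

lemma hasPvInt_signedRpow_div_sub (hγ : 0 < γ) (hu0 : u ≠ 0) (hu : u ∈ Ioo (-a) a) :
    HasPvInt (fun x ↦ signedRpow (γ - 1) x / (x - u)) (-a) a u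
      (|u| ^ (γ - 1) * (∫ s in 0..a / |u|, foldedKernel γ s)
        + signedRpow (γ - 1) u * log ((a - u) / (a + u))) := by
  have hle : -a ≤ a := (hu.1.trans hu.2).le
  have hint : IntegrableOn (signedRpow (γ - 1)) (Ioo (-a) a) :=
    (intervalIntegrable_iff_integrableOn_Ioo_of_le hle).1
      (intervalIntegrable_signedRpow (by linarith))
  have hdiff := differentiableAt_signedRpow (γ - 1) hu0
  have hslope : IntervalIntegrable (slope (signedRpow (γ - 1)) u) volume (-a) a :=
    (intervalIntegrable_iff_integrableOn_Ioo_of_le hle).2 (integrableOn_slope hint hdiff)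
  have hfold : ∫ x in Ioo (-a) a, slope (signedRpow (γ - 1)) u x
      = |u| ^ (γ - 1) * ∫ s in 0..a / |u|, foldedKernel γ s := by
    rw [← integral_Ioc_eq_integral_Ioo, ← intervalIntegral.integral_of_le hle,
      integral_slope_of_odd (signedRpow_neg _) hslope,
      ← integral_two_mul_rpow_sub_div_sq_sub (by linarith) hu0]
    refine intervalIntegral.integral_congr_ae ?_
    filter_upwards [Measure.ae_ne volume 0] with x hx _
    rw [mul_signedRpow_sub_one γ hx, mul_signedRpow_sub_one γ hu0]
  have hpv := hasPvInt_div_sub hu hint hdiff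
  rwa [hfold, sub_neg_eq_add, add_comm u a] at hpv

end SignedRpow

section Periodic

variable {g : ℝ → ℝ} {u x : ℝ}

lemma perExt_of_mem_Ico (g : ℝ → ℝ) (hx : x ∈ Ico (-π) π) : perExt g x = g x := by
  have hfloor : ⌊(x + π) / (2 * π)⌋ = 0 := by
    rw [Int.floor_eq_zero_iff]
    exact ⟨div_nonneg (by linarith [hx.1]) two_pi_pos.le,
      (div_lt_one two_pi_pos).2 (by linarith [hx.2])⟩
  simp only [perExt, hfloor, Int.cast_zero, mul_zero, sub_zero]

lemma deriv_perExt_of_mem_Ioo (g : ℝ → ℝ) (hx : x ∈ Ioo (-π) π) :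
    deriv (perExt g) x = deriv g x := by
  refine EventuallyEq.deriv_eq ?_
  filter_upwards [Ioo_mem_nhds hx.1 hx.2] with y hy
  exact perExt_of_mem_Ico g (Ioo_subset_Ico_self hy)

lemma perExt_const_mul_abs_rpow_sq (A β : ℝ) :
    (fun x ↦ perExt (fun y ↦ A * |y| ^ β) x ^ 2) = perExt fun y ↦ A ^ 2 * |y| ^ (2 * β) := by
  ext x
  simp only [perExt]
  rw [mul_pow, ← rpow_mul_natCast (abs_nonneg _), Nat.cast_two, mul_comm β]

lemma pvInt_congr_ae {f g : ℝ → ℝ} (h : f =ᵐ[volume.restrict (Ioo (-π) π)] g) (u : ℝ) :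
    pvInt f u = pvInt g u := by
  unfold pvInt
  congr with ε
  exact integral_congr_ae (ae_restrict_of_ae_restrict_of_subset (fun _ hx ↦ hx.1) h)

lemma periodicHilbert_congr_ae {f g : ℝ → ℝ} (h : f =ᵐ[volume.restrict (Ioo (-π) π)] g) (u : ℝ) :
    periodicHilbert f u = periodicHilbert g u := by
  unfold periodicHilbert
  congr with n
  exact pvInt_congr_ae (h.mono fun x hx ↦ by simp only [hx]) u

lemma abs_inv_add_sub_inv_le {t m r : ℝ} (hm : m ≠ 0) (hr : r < 1) (ht : |t| ≤ r * |m|) :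
    |(t + m)⁻¹ - m⁻¹| ≤ |t| / ((1 - r) * m ^ 2) := by
  have hm' : 0 < |m| := abs_pos.2 hm
  have hlow : (1 - r) * |m| ≤ |t + m| := by
    have := abs_sub_abs_le_abs_add m t
    rw [add_comm m t] at this
    linarith
  have hpos : 0 < (1 - r) * |m| := mul_pos (sub_pos.2 hr) hm'
  have htm : t + m ≠ 0 := abs_pos.1 (hpos.trans_le hlow)
  rw [inv_sub_inv htm hm, abs_div, sub_add_cancel_right, abs_neg, abs_mul, ← sq_abs m, sq,
    ← mul_assoc]
  gcongr

lemma abs_inv_sub_add_sub_inv_le (hx : x ∈ Ioo (-π) π) (hu : |u| ≤ π / 2) {n : ℤ} (hn : n ≠ 0) :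
    |(x - u + 2 * π * n)⁻¹ - (2 * π * n)⁻¹| ≤ 3 / (2 * π) * (1 / (n : ℝ) ^ 2) := by
  have hn0 : (n : ℝ) ≠ 0 := Int.cast_ne_zero.2 hn
  have hn1 : (1 : ℝ) ≤ |(n : ℝ)| := by exact_mod_cast Int.one_le_abs hn
  have hxu : |x - u| ≤ 3 * π / 2 := by
    have := abs_lt.2 hx
    linarith [abs_sub x u]
  have hm : 3 * π / 2 ≤ 3 / 4 * |2 * π * (n : ℝ)| := by
    rw [abs_mul, abs_of_pos two_pi_pos]
    nlinarith [pi_pos]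
  calc |(x - u + 2 * π * n)⁻¹ - (2 * π * n)⁻¹|
      ≤ |x - u| / ((1 - 3 / 4) * (2 * π * n) ^ 2) :=
        abs_inv_add_sub_inv_le (by positivity) (by norm_num) (hxu.trans hm)
    _ ≤ 3 * π / 2 / ((1 - 3 / 4) * (2 * π * n) ^ 2) := by gcongr
    _ = 3 / (2 * π) * (1 / (n : ℝ) ^ 2) := by
        field_simp
        norm_num

-- As `g` has mean zero, the kernel may be replaced by its difference from `(2 * π * n)⁻¹`, which
-- gains a power of `n`.
lemma norm_pvInt_div_sub_add_le (hg : IntegrableOn g (Ioo (-π) π))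
    (hg0 : ∫ x in Ioo (-π) π, g x = 0) (hu : |u| ≤ π / 2) {n : ℤ} (hn : n ≠ 0) :
    ‖pvInt (fun x ↦ g x / (x - u + 2 * π * n)) u‖
      ≤ (∫ x in Ioo (-π) π, ‖g x‖) * (3 / (2 * π)) * (1 / (n : ℝ) ^ 2) := by
  have hker : ∀ᵐ x ∂volume.restrict (Ioo (-π) π),
      ‖(x - u + 2 * π * n)⁻¹ - (2 * π * n)⁻¹‖ ≤ 3 / (2 * π) * (1 / (n : ℝ) ^ 2) := by
    filter_upwards [ae_restrict_mem measurableSet_Ioo] with x hx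
    exact abs_inv_sub_add_sub_inv_le hx hu hn
  have hdiff : IntegrableOn (fun x ↦ g x * ((x - u + 2 * π * n)⁻¹ - (2 * π * n)⁻¹))
      (Ioo (-π) π) := hg.mul_bdd (by fun_prop) hker
  have hsplit : (fun x ↦ g x / (x - u + 2 * π * n))
      = fun x ↦ g x * ((x - u + 2 * π * n)⁻¹ - (2 * π * n)⁻¹) + g x * (2 * π * n)⁻¹ := by
    ext x
    ring
  have hint : IntegrableOn (fun x ↦ g x / (x - u + 2 * π * n)) (Ioo (-π) π) := by
    rw [hsplit]
    exact hdiff.add (hg.mul_const _)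
  rw [(hasPvInt_of_integrableOn u hint).pvInt_eq, hsplit, integral_add hdiff (hg.mul_const _),
    integral_mul_const (2 * π * n : ℝ)⁻¹, hg0, zero_mul, add_zero]
  calc ‖∫ x in Ioo (-π) π, g x * ((x - u + 2 * π * n)⁻¹ - (2 * π * n)⁻¹)‖
      ≤ ∫ x in Ioo (-π) π, ‖g x‖ * (3 / (2 * π) * (1 / (n : ℝ) ^ 2)) := by
        refine norm_integral_le_of_norm_le (hg.norm.mul_const _) ?_
        filter_upwards [hker] with x hx
        rw [norm_mul]
        gcongr
    _ = (∫ x in Ioo (-π) π, ‖g x‖) * (3 / (2 * π)) * (1 / (n : ℝ) ^ 2) := by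
        rw [integral_mul_const, mul_assoc]

lemma isBigO_periodicHilbert_sub_pvInt (hg : IntegrableOn g (Ioo (-π) π))
    (hg0 : ∫ x in Ioo (-π) π, g x = 0) :
    (fun u ↦ periodicHilbert g u - 1 / π * pvInt (fun x ↦ g x / (x - u)) u)
      =O[nhds 0] fun _ ↦ (1 : ℝ) := by
  set M := (∫ x in Ioo (-π) π, ‖g x‖) * (3 / (2 * π))
  have hsq : Summable fun n : ℤ ↦ 1 / (n : ℝ) ^ 2 :=
    Real.summable_one_div_int_pow.2 one_lt_two
  refine .of_bound (1 / π * (M * ∑' n : ℤ, 1 / (n : ℝ) ^ 2)) ?_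
  filter_upwards [Metric.closedBall_mem_nhds (0 : ℝ) pi_div_two_pos] with u hu
  rw [mem_closedBall_zero_iff, norm_eq_abs] at hu
  set c : ℤ → ℝ := fun n ↦ pvInt (fun x ↦ g x / (x - u + 2 * π * n)) u with hc_def
  have hc {n : ℤ} (hn : n ≠ 0) : ‖c n‖ ≤ M * (1 / (n : ℝ) ^ 2) :=
    norm_pvInt_div_sub_add_le hg hg0 hu hn
  have hc_summable : Summable c := (hsq.mul_left M).of_norm_bounded_eventually
    ((eventually_cofinite_ne 0).mono fun n hn ↦ hc hn)
  have hc0 : c 0 = pvInt (fun x ↦ g x / (x - u)) u := by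
    simp only [hc_def, Int.cast_zero, mul_zero, add_zero]
  have htail : ‖∑' n, if n = 0 then 0 else c n‖ ≤ M * ∑' n : ℤ, 1 / (n : ℝ) ^ 2 := by
    refine tsum_of_norm_bounded (hsq.hasSum.mul_left M) fun n ↦ ?_
    split_ifs with hn
    · simp [hn]
    · exact hc hn
  rw [periodicHilbert, hc_summable.tsum_eq_add_tsum_ite 0, hc0, ← mul_sub, add_sub_cancel_left,
    norm_mul, norm_one, mul_one, norm_of_nonneg (one_div_pos.2 pi_pos).le]
  gcongr

end Periodic

section Asymptotics

variable {γ : ℝ}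

lemma tendsto_const_div_abs_atTop {c : ℝ} (hc : 0 < c) :
    Tendsto (fun u : ℝ ↦ c / |u|) (nhdsWithin 0 {0}ᶜ) atTop :=
  (tendsto_inv_nhdsGT_zero.comp tendsto_abs_nhdsNE_zero).const_mul_atTop hc

lemma isBigO_abs_rpow_one (hγ : 0 ≤ γ) :
    (fun u : ℝ ↦ |u| ^ γ) =O[nhdsWithin 0 {0}ᶜ] fun _ ↦ (1 : ℝ) := by
  refine .of_bound 1 ?_
  filter_upwards [nhdsWithin_le_nhds (Metric.closedBall_mem_nhds (0 : ℝ) one_pos)] with u hu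
  rw [norm_of_nonneg (rpow_nonneg (abs_nonneg u) γ), norm_one, mul_one]
  exact rpow_le_one (abs_nonneg u) (mem_closedBall_zero_iff.1 hu) hγ

lemma isBigO_abs_rpow_mul_integral_foldedKernel_sub_tan (hγ0 : 0 ≤ γ) (hγ1 : γ ≠ 1) {a : ℝ}
    (ha : 0 < a) :
    (fun u ↦ |u| ^ (γ - 1) * ((∫ s in 0..a / |u|, foldedKernel γ s) - π * Real.tan (π * γ / 2)))
      =O[nhdsWithin 0 {0}ᶜ] fun _ ↦ (1 : ℝ) := by
  have hker := (isBigO_integral_foldedKernel_sub_tan hγ0 hγ1).comp_tendsto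
    (tendsto_const_div_abs_atTop ha)
  refine ((isBigO_refl (fun u : ℝ ↦ |u| ^ (γ - 1)) _).mul hker).trans
    ((isBigO_const_const (a ^ (γ - 1)) one_ne_zero _).congr' ?_ .rfl)
  filter_upwards [self_mem_nhdsWithin] with u hu
  have hu' : 0 < |u| := abs_pos.2 hu
  rw [Function.comp_apply, div_rpow ha.le hu'.le, mul_div_cancel₀ _ (rpow_pos_of_pos hu' _).ne']

lemma isBigO_log_sub_div_add {a : ℝ} (ha : 0 < a) :
    (fun u ↦ log ((a - u) / (a + u))) =O[nhds 0] fun u ↦ u := by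
  have hdiff : DifferentiableAt ℝ (fun u ↦ log ((a - u) / (a + u))) 0 := by
    have : a + 0 ≠ 0 := by simpa using ha.ne'
    have : (a - 0) / (a + 0) ≠ 0 := by simp [ha.ne']
    fun_prop (disch := assumption)
  simpa [ha.ne'] using hdiff.isBigO_sub

lemma isBigO_signedRpow_mul_log (hγ : 0 ≤ γ) {a : ℝ} (ha : 0 < a) :
    (fun u ↦ signedRpow (γ - 1) u * log ((a - u) / (a + u)))
      =O[nhdsWithin 0 {0}ᶜ] fun _ ↦ (1 : ℝ) := by
  refine ((isBigO_refl (signedRpow (γ - 1)) _).mul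
    ((isBigO_log_sub_div_add ha).mono nhdsWithin_le_nhds)).trans
    ((isBigO_abs_rpow_one hγ).congr' ?_ .rfl)
  filter_upwards [self_mem_nhdsWithin] with u hu
  rw [mul_comm, mul_signedRpow_sub_one γ hu]

lemma isBigO_pvInt_signedRpow_sub_tan (hγ0 : 0 < γ) (hγ1 : γ ≠ 1) (c : ℝ) :
    (fun u ↦ pvInt (fun x ↦ c * signedRpow (γ - 1) x / (x - u)) u
        - c * (π * Real.tan (π * γ / 2) * |u| ^ (γ - 1)))
      =O[nhdsWithin 0 {0}ᶜ] fun _ ↦ (1 : ℝ) := by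
  refine (((isBigO_abs_rpow_mul_integral_foldedKernel_sub_tan hγ0.le hγ1 pi_pos).add
    (isBigO_signedRpow_mul_log hγ0.le pi_pos)).const_mul_left c).congr' ?_ .rfl
  filter_upwards [self_mem_nhdsWithin,
    nhdsWithin_le_nhds (Ioo_mem_nhds (neg_neg_of_pos pi_pos) pi_pos)] with u hu0 hu
  simp only [mul_div_assoc c]
  rw [((hasPvInt_signedRpow_div_sub hγ0 hu0 hu).const_mul c).pvInt_eq]
  ring

theorem isBigO_Kinf_perExt_const_mul_abs_rpow (hγ0 : 0 < γ) (hγ1 : γ ≠ 1) (C : ℝ) :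
    (fun u ↦ Kinf (perExt fun y ↦ C * |y| ^ γ) u
        + C * γ * Real.tan (π * γ / 2) * |u| ^ (γ - 1))
      =O[nhdsWithin 0 {0}ᶜ] fun _ ↦ (1 : ℝ) := by
  have hderiv : deriv (perExt fun y ↦ C * |y| ^ γ)
      =ᵐ[volume.restrict (Ioo (-π) π)] fun x ↦ C * γ * signedRpow (γ - 1) x := by
    filter_upwards [ae_restrict_mem measurableSet_Ioo,
      ae_restrict_of_ae (Measure.ae_ne volume 0)] with x hx hx0
    rw [deriv_perExt_of_mem_Ioo _ hx, (hasDerivAt_const_mul_abs_rpow C γ hx0).deriv]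
  have hle : -π ≤ π := neg_le_self pi_pos.le
  have hint : IntegrableOn (fun x ↦ C * γ * signedRpow (γ - 1) x) (Ioo (-π) π) :=
    ((intervalIntegrable_iff_integrableOn_Ioo_of_le hle).1
      (intervalIntegrable_signedRpow (by linarith))).const_mul _
  have hmean : ∫ x in Ioo (-π) π, C * γ * signedRpow (γ - 1) x = 0 := by
    rw [integral_const_mul, ← integral_Ioc_eq_integral_Ioo,
      ← intervalIntegral.integral_of_le hle, integral_signedRpow_neg_self, mul_zero]
  refine (((isBigO_periodicHilbert_sub_pvInt hint hmean).mono nhdsWithin_le_nhds).add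
    ((isBigO_pvInt_signedRpow_sub_tan hγ0 hγ1 (C * γ)).const_mul_left (1 / π))).neg_left.congr_left
    fun u ↦ ?_
  rw [Kinf, periodicHilbert_congr_ae hderiv]
  field_simp
  ring

theorem expansion_T_singular_general (A : ℝ) {β : ℝ} (hβ0 : 0 < β) (hβ1 : β ≠ 1)
    (hβ2 : β ≠ 1 / 2) :
    (fun u ↦ 1 / 2 * Kinf (fun x ↦ perExt (fun y ↦ A * |y| ^ β) x ^ 2) u
        + perExt (fun y ↦ A * |y| ^ β) u * Kinf (perExt fun y ↦ A * |y| ^ β) u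
        + A ^ 2 * β * (Real.tan (π * β) + Real.tan (π * β / 2)) * |u| ^ (2 * β - 1))
      =O[nhdsWithin 0 {0}ᶜ] fun _ ↦ (1 : ℝ) := by
  have hsq := isBigO_Kinf_perExt_const_mul_abs_rpow (mul_pos two_pos hβ0)
    (fun h ↦ hβ2 (by linarith)) (A ^ 2)
  have hprod := ((isBigO_abs_rpow_one hβ0.le).const_mul_left A).mul
    (isBigO_Kinf_perExt_const_mul_abs_rpow hβ0 hβ1 A)
  simp only [mul_one] at hprod
  refine ((hsq.const_mul_left (1 / 2)).add hprod).congr' ?_ .rfl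
  filter_upwards [self_mem_nhdsWithin,
    nhdsWithin_le_nhds (Ioo_mem_nhds (neg_neg_of_pos pi_pos) pi_pos)] with u hu0 hu
  have hpow : |u| ^ (2 * β - 1) = |u| ^ β * |u| ^ (β - 1) := by
    rw [← rpow_add (abs_pos.2 hu0), two_mul, add_sub_assoc]
  rw [perExt_const_mul_abs_rpow_sq, perExt_of_mem_Ico (fun y ↦ A * |y| ^ β)
    (Ioo_subset_Ico_self hu), mul_left_comm π 2 β, mul_div_cancel_left₀ (π * β) two_ne_zero, hpow]
  ring

end Asymptotics

/-- Expansion of `(1/2) K_∞ (f²) + f · K_∞ f` for `f` the `2π`-periodic extension of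
`A|u|^β`, `β ∈ (0,1)`, `β ≠ 1/2`. -/
theorem expansion_T_singular (A β : ℝ) (hA : 0 < A) (hβ : β ∈ Set.Ioo (0:ℝ) 1)
    (hβ' : β ≠ 1/2) :
    ∃ R₁ R₂ : ℝ → ℝ,
      R₁ =O[nhdsWithin (0:ℝ) {0}ᶜ] (fun _ => (1:ℝ)) ∧
      R₂ =o[nhdsWithin (0:ℝ) {0}ᶜ] (fun u => |u| ^ (2*β - 1)) ∧
      ∀ᶠ u in nhdsWithin (0:ℝ) {0}ᶜ,
        (1/2) * Kinf (fun x => (perExt (fun y => A * |y| ^ β) x)^2) u +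
            perExt (fun y => A * |y| ^ β) u * Kinf (perExt (fun y => A * |y| ^ β)) u =
          -A^2 * β * (Real.tan (π*β) + Real.tan (π*β/2)) * |u| ^ (2*β - 1)
            + R₁ u + R₂ u :=
  ⟨_, fun _ ↦ 0, expansion_T_singular_general A hβ.1 hβ.2.ne hβ', isLittleO_zero _ _,
    .of_forall fun u ↦ by ring⟩
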